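/- (Stationary energy of an equilibrium configuration in dimension n ≥ 3.) Let n ≥ 3, γ > 1, G > 0. Let D ⊂ ℝⁿ be a bounded open set with C¹ boundary, let ρ : ℝⁿ → ℝ be continuous, nonnegative, bounded, and supported in the closure of D, define the potential Φ(x) = −G·∫_{ℝⁿ} ρ(y)/‖x−y‖^{n−2} dy, and let p : closure(D) → ℝ be continuously differentiable with p = 0 on ∂D and ∇p(x) = −ρ(x)·∇Φ(x) for all x ∈ D. Then the stationary total energy E := ∫_D p(x)/(γ−1) dx + (1/2)·∫_D ρ(x)·Φ(x) dx satisfies E = ((2(n−1) − n·γ)/((n−2)·(γ−1)))·∫_D p(x) dx. In particular, for n = 3 this gives E = (3·(4/3 − γ)/(γ−1))·∫_D p dx, which vanishes when γ = 4/3. -/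

import Mathlib

open Set MeasureTheory
open scoped InnerProductSpace

/-- `D` has `C¹` boundary: it is the sublevel set of a `C¹` defining function whose
differential does not vanish on the boundary. -/
def HasC1Boundary {n : ℕ} (D : Set (EuclideanSpace ℝ (Fin n))) : Prop :=
  ∃ f : EuclideanSpace ℝ (Fin n) → ℝ,
    ContDiff ℝ 1 f ∧ D = f ⁻¹' Iio 0 ∧ ∀ x ∈ frontier D, fderiv ℝ f x ≠ 0


lemma scale_deriv {n : ℕ} (g w : EuclideanSpace ℝ (Fin n) → ℝ) (K : NNReal) (hg : LipschitzWith K g)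
    (hw : Integrable w) (hgw : Integrable (fun x => w x * g x))
    (hw' : Integrable (fun x => ‖w x‖ * ‖x‖)) :
    HasDerivAt (fun t : ℝ => ∫ x, w x * g (t • x)) (∫ x, w x * fderiv ℝ g x x) 1 := by
  refine (hasDerivAt_integral_of_dominated_loc_of_lip (s := univ) (bound := fun x => K * (‖w x‖ * ‖x‖))
    Filter.univ_mem ?_ ?_ ?_ ?_ (hw'.const_mul _) ?_).2
  · refine Filter.Eventually.of_forall fun t => ?_
    exact hw.aestronglyMeasurable.mul
      (hg.continuous.comp (continuous_const_smul t)).aestronglyMeasurable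
  · simpa using hgw
  · refine hw.aestronglyMeasurable.mul ?_
    have := (measurable_fderiv ℝ g)
    have h2 : Measurable (fun x => fderiv ℝ g x x) := by
      have := Continuous.measurable (f := fun q : (EuclideanSpace ℝ (Fin n) →L[ℝ] ℝ) × EuclideanSpace ℝ (Fin n) => q.1 q.2) (by fun_prop)
      exact this.comp ((measurable_fderiv ℝ g).prodMk measurable_id)
    exact h2.aestronglyMeasurable
  · refine Filter.Eventually.of_forall fun x => ?_
    rw [lipschitzOnWith_univ]
    refine LipschitzWith.of_dist_le_mul fun s t => ?_
    have h0 : 0 ≤ (K:ℝ) * (‖w x‖ * ‖x‖) := by positivity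
    rw [Real.coe_nnabs, abs_of_nonneg h0, Real.dist_eq, ← mul_sub, abs_mul]
    have h1 := hg.dist_le_mul (s • x) (t • x)
    rw [Real.dist_eq, dist_eq_norm, ← sub_smul, norm_smul] at h1
    rw [Real.dist_eq]
    calc |w x| * |g (s • x) - g (t • x)| ≤ |w x| * (K * (‖s - t‖ * ‖x‖)) := by gcongr
      _ = _ := by simp only [Real.norm_eq_abs]; ring
  · filter_upwards [hg.ae_differentiableAt (μ := volume)] with x hx
    have h1 : HasFDerivAt g (fderiv ℝ g x) ((1:ℝ) • x) := by simpa using hx.hasFDerivAt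
    have h2 : HasDerivAt (fun t : ℝ => t • x) x 1 := by
      simpa using (hasDerivAt_id (1:ℝ)).smul_const x
    exact (h1.comp_hasDerivAt (1:ℝ) h2).const_mul (w x)

lemma kernel_diff (m : ℕ) (a b : ℝ) (ha : 0 < a) (hb : 0 < b) :
    |1 / a ^ m - 1 / b ^ m| ≤ m * |a - b| * (1 / a ^ (m+1) + 1 / b ^ (m+1)) := by
  have key : ∀ u v : ℝ, 0 < u → 0 < v → |u ^ m - v ^ m| ≤ m * |u⁻¹ - v⁻¹| * (u ^ (m+1) + v ^ (m+1)) := by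
    intro u v hu hv
    have h1 := abs_pow_sub_pow_le u v m
    rw [abs_of_pos hu, abs_of_pos hv] at h1
    have h2 : |u - v| = |u⁻¹ - v⁻¹| * (u * v) := by
      rw [← abs_of_pos (mul_pos hu hv), ← abs_mul, abs_sub_comm]
      congr 1; field_simp
    rcases Nat.eq_zero_or_pos m with rfl | hm
    · simp
    refine h1.trans ?_
    rw [h2]
    have hM : 0 < max u v := lt_max_of_lt_left hu
    have h3 : u * v ≤ max u v ^ 2 := by
      rw [sq]; gcongr
      · exact le_max_left _ _
      · exact le_max_right _ _
    have h4 : max u v ^ (m+1) ≤ u ^ (m+1) + v ^ (m+1) := by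
      rcases max_cases u v with h | h <;> rw [h.1]
      · linarith [pow_pos hv (m+1)]
      · linarith [pow_pos hu (m+1)]
    calc |u⁻¹ - v⁻¹| * (u * v) * m * max u v ^ (m-1)
        ≤ |u⁻¹ - v⁻¹| * (max u v ^ 2) * m * max u v ^ (m-1) := by gcongr
      _ = m * |u⁻¹ - v⁻¹| * max u v ^ (m+1) := by
          obtain ⟨k, rfl⟩ : ∃ k, m = k + 1 := ⟨m - 1, by omega⟩
          simp only [Nat.add_sub_cancel]; ring
      _ ≤ _ := by gcongr
  have := key a⁻¹ b⁻¹ (inv_pos.2 ha) (inv_pos.2 hb)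
  simpa [one_div] using this

lemma kernel_loc {m : ℕ} : IntegrableOn (fun z : EuclideanSpace ℝ (Fin (m+2)) => 1 / ‖z‖ ^ (m+1)) (Metric.ball 0 1) := by
  rw [← integrable_indicator_iff measurableSet_ball]
  have : (Metric.ball (0 : EuclideanSpace ℝ (Fin (m+2))) 1).indicator (fun z => 1 / ‖z‖ ^ (m+1))
      = fun z => ((Iio (1:ℝ)).indicator (fun r => 1 / r ^ (m+1))) ‖z‖ := by
    ext z
    simp [indicator]
  rw [this, integrable_fun_norm_addHaar]
  have h2 : IntegrableOn ((Ioo (0:ℝ) 1).indicator (fun _ => (1:ℝ))) (Ioi 0) := by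
    apply Integrable.integrableOn
    rw [integrable_indicator_iff measurableSet_Ioo]
    simp
  refine h2.congr_fun ?_ measurableSet_Ioi
  intro r hr
  have hr : 0 < r := hr
  by_cases h : r < 1 <;> simp [indicator, h, hr]
  field_simp

/-- uniform bound on the singular potential -/
lemma pot_bound {m : ℕ} (ρ : EuclideanSpace ℝ (Fin (m+2)) → ℝ) (hc : Continuous ρ)
    (h0 : ∀ x, 0 ≤ ρ x) (C : ℝ) (hC : ∀ x, ρ x ≤ C) (hi : Integrable ρ) :
    ∃ M : ℝ, ∀ x, Integrable (fun y => ρ y / ‖x - y‖ ^ (m+1)) ∧ ∫ y, ρ y / ‖x - y‖ ^ (m+1) ≤ M := by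
  set k := (Metric.ball (0 : EuclideanSpace ℝ (Fin (m+2))) 1).indicator (fun z => 1 / ‖z‖ ^ (m+1)) with hk
  have hkI : Integrable k := (integrable_indicator_iff measurableSet_ball).2 kernel_loc
  have hb : ∀ x y, ρ y / ‖x - y‖ ^ (m+1) ≤ C * k (x - y) + ρ y := by
    intro x y
    by_cases h : ‖x - y‖ < 1
    · have : k (x - y) = 1 / ‖x - y‖ ^ (m+1) := by simp [hk, h]
      rw [this, ← mul_one_div]
      have : ρ y * (1 / ‖x - y‖ ^ (m+1)) ≤ C * (1 / ‖x - y‖ ^ (m+1)) := by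
        gcongr; exact hC y
      linarith [h0 y]
    · have : k (x - y) = 0 := by simp [hk, h]
      rw [this, mul_zero, zero_add]
      exact div_le_self (h0 y) (one_le_pow₀ (not_lt.1 h))
  have hI : ∀ x, Integrable (fun y => C * k (x - y) + ρ y) := fun x =>
    ((hkI.comp_sub_left x).const_mul C).add hi
  have hI2 : ∀ x, Integrable (fun y => ρ y / ‖x - y‖ ^ (m+1)) := by
    intro x
    refine (hI x).mono' ?_ (Filter.Eventually.of_forall fun y => ?_)
    · exact (Measurable.div hc.measurable (by fun_prop)).aestronglyMeasurable
    · rw [Real.norm_of_nonneg (div_nonneg (h0 y) (by positivity))]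
      exact hb x y
  refine ⟨C * (∫ z, k z) + ∫ y, ρ y, fun x => ⟨hI2 x, ?_⟩⟩
  refine (integral_mono (hI2 x) (hI x) (hb x)).trans_eq ?_
  rw [integral_add ((hkI.comp_sub_left x).const_mul C) hi, integral_const_mul,
    integral_sub_left_eq_self k volume x]

lemma pot_int {m : ℕ} (ρ : EuclideanSpace ℝ (Fin (m+2)) → ℝ) (hc : Continuous ρ)
    (h0 : ∀ x, 0 ≤ ρ x) (C : ℝ) (hC : ∀ x, ρ x ≤ C) (hi : Integrable ρ) (x) :
    Integrable (fun y => ρ y / ‖x - y‖ ^ m) := by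
  obtain ⟨M, hM⟩ := pot_bound ρ hc h0 C hC hi
  refine ((hM x).1.add hi).mono' ?_ ?_
  · exact (Measurable.div hc.measurable (by fun_prop)).aestronglyMeasurable
  · filter_upwards [Measure.ae_ne volume x] with y hy
    have hp : 0 < ‖x - y‖ := norm_pos_iff.2 (sub_ne_zero.2 hy.symm)
    rw [Real.norm_of_nonneg (div_nonneg (h0 y) (by positivity))]
    simp only [Pi.add_apply]
    rcases le_total 1 ‖x - y‖ with h | h
    · have := div_le_self (h0 y) (one_le_pow₀ h (n := m))
      have : 0 ≤ ρ y / ‖x - y‖ ^ (m+1) := div_nonneg (h0 y) (by positivity)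
      linarith
    · have : ρ y / ‖x - y‖ ^ m ≤ ρ y / ‖x - y‖ ^ (m+1) := by
        have := pow_le_pow_of_le_one hp.le h (Nat.le_succ m)
        have := h0 y
        gcongr
      linarith [h0 y]

lemma pot_lip {m : ℕ} (ρ : EuclideanSpace ℝ (Fin (m+2)) → ℝ) (hc : Continuous ρ)
    (h0 : ∀ x, 0 ≤ ρ x) (C : ℝ) (hC : ∀ x, ρ x ≤ C) (hi : Integrable ρ) :
    ∃ K : NNReal, LipschitzWith K (fun x => ∫ y, ρ y / ‖x - y‖ ^ m) := by
  obtain ⟨M, hM⟩ := pot_bound ρ hc h0 C hC hi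
  have hM0 : 0 ≤ M := le_trans (integral_nonneg fun y => div_nonneg (h0 y) (by positivity)) (hM 0).2
  refine ⟨Real.toNNReal (m * (M + M)), LipschitzWith.of_dist_le_mul fun x x' => ?_⟩
  have hI := pot_int ρ hc h0 C hC hi
  rw [Real.dist_eq, ← integral_sub (hI x) (hI x')]
  have hb : ∀ᵐ y, ‖ρ y / ‖x - y‖ ^ m - ρ y / ‖x' - y‖ ^ m‖ ≤
      m * dist x x' * (ρ y / ‖x - y‖ ^ (m+1) + ρ y / ‖x' - y‖ ^ (m+1)) := by
    filter_upwards [Measure.ae_ne volume x, Measure.ae_ne volume x'] with y hy hy'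
    have hp : 0 < ‖x - y‖ := norm_pos_iff.2 (sub_ne_zero.2 hy.symm)
    have hp' : 0 < ‖x' - y‖ := norm_pos_iff.2 (sub_ne_zero.2 hy'.symm)
    have h1 := kernel_diff m _ _ hp hp'
    have h2 : |‖x - y‖ - ‖x' - y‖| ≤ dist x x' := by
      refine (abs_norm_sub_norm_le _ _).trans_eq ?_
      rw [dist_eq_norm]; congr 1; abel
    have h3 : ρ y / ‖x - y‖ ^ m - ρ y / ‖x' - y‖ ^ m = ρ y * (1 / ‖x - y‖ ^ m - 1 / ‖x' - y‖ ^ m) := by ring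
    rw [h3, Real.norm_eq_abs, abs_mul, abs_of_nonneg (h0 y)]
    have := h0 y
    calc _ ≤ ρ y * (m * dist x x' * (1 / ‖x - y‖ ^ (m+1) + 1 / ‖x' - y‖ ^ (m+1))) := by
          gcongr
          exact h1.trans (by gcongr)
      _ = _ := by ring
  have hI2 : Integrable (fun y => m * dist x x' * (ρ y / ‖x - y‖ ^ (m+1) + ρ y / ‖x' - y‖ ^ (m+1))) :=
    ((hM x).1.add (hM x').1).const_mul _
  rw [← Real.norm_eq_abs]
  refine (norm_integral_le_of_norm_le hI2 hb).trans ?_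
  rw [integral_const_mul, integral_add (hM x).1 (hM x').1]
  have h1 := (hM x).2
  have h2 := (hM x').2
  calc _ ≤ m * dist x x' * (M + M) := by gcongr
    _ = _ := by rw [Real.coe_toNNReal _ (by positivity)]; ring

lemma pot_sym {m : ℕ} (ρ : EuclideanSpace ℝ (Fin (m+2)) → ℝ) (hc : Continuous ρ)
    (h0 : ∀ x, 0 ≤ ρ x) (C : ℝ) (hC : ∀ x, ρ x ≤ C) (hs : HasCompactSupport ρ) (t : ℝ) (ht : 0 < t) :
    ∫ x, ρ x * (∫ y, ρ y / ‖t • x - y‖ ^ m) =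
      (t⁻¹) ^ m * ∫ x, ρ x * (∫ y, ρ y / ‖t⁻¹ • x - y‖ ^ m) := by
  have hi : Integrable ρ := hc.integrable_of_hasCompactSupport hs
  obtain ⟨K, hK⟩ := pot_lip ρ hc h0 C hC hi
  have hI := pot_int ρ hc h0 C hC hi
  have hprod : Integrable (Function.uncurry fun x y => ρ x * (ρ y / ‖t • x - y‖ ^ m))
      (volume.prod volume) := by
    rw [integrable_prod_iff]
    · refine ⟨Filter.Eventually.of_forall fun x => by
        simpa [Function.uncurry] using (hI (t • x)).const_mul (ρ x), ?_⟩
      have : (fun x => ∫ y, ‖Function.uncurry (fun x y => ρ x * (ρ y / ‖t • x - y‖ ^ m)) (x, y)‖)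
          = fun x => ρ x * ∫ y, ρ y / ‖t • x - y‖ ^ m := by
        ext x
        rw [← integral_const_mul]
        congr 1; ext y
        exact Real.norm_of_nonneg (mul_nonneg (h0 x) (div_nonneg (h0 y) (by positivity)))
      rw [this]
      exact (hc.mul (hK.continuous.comp (continuous_const_smul t))).integrable_of_hasCompactSupport
        hs.mul_right
    · have hm := hc.measurable
      refine Measurable.aestronglyMeasurable ?_
      unfold Function.uncurry
      exact (hm.comp measurable_fst).mul ((hm.comp measurable_snd).div (by fun_prop))
  simp_rw [← integral_const_mul]
  rw [integral_integral_swap hprod]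
  congr 1; ext y; congr 1; ext x
  have : ‖t • x - y‖ = t * ‖t⁻¹ • y - x‖ := by
    rw [norm_sub_rev (t⁻¹ • y), ← Real.norm_of_nonneg ht.le, ← norm_smul, smul_sub, smul_smul,
      Real.norm_of_nonneg ht.le, mul_inv_cancel₀ ht.ne', one_smul]
  rw [this, mul_pow, inv_pow]
  field_simp

lemma pot_virial {m : ℕ} (ρ : EuclideanSpace ℝ (Fin (m+2)) → ℝ) (hc : Continuous ρ)
    (h0 : ∀ x, 0 ≤ ρ x) (C : ℝ) (hC : ∀ x, ρ x ≤ C) (hs : HasCompactSupport ρ)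
    (V : EuclideanSpace ℝ (Fin (m+2)) → ℝ) (hV : V = fun x => ∫ y, ρ y / ‖x - y‖ ^ m) :
    2 * ∫ x, ρ x * fderiv ℝ V x x = - m * ∫ x, ρ x * V x := by
  have hi : Integrable ρ := hc.integrable_of_hasCompactSupport hs
  obtain ⟨K, hK⟩ := pot_lip ρ hc h0 C hC hi
  rw [← hV] at hK
  have hd := scale_deriv V ρ K hK hi
    ((hc.mul hK.continuous).integrable_of_hasCompactSupport hs.mul_right)
    ((hc.norm.mul continuous_norm).integrable_of_hasCompactSupport hs.norm.mul_right)
  set F : ℝ → ℝ := fun t => ∫ x, ρ x * V (t • x) with hF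
  set A := ∫ x, ρ x * fderiv ℝ V x x
  have hF1 : F 1 = ∫ x, ρ x * V x := by simp [hF]
  have hinv : HasDerivAt (fun t : ℝ => t⁻¹) (-1) 1 := by simpa using hasDerivAt_inv (one_ne_zero (α := ℝ))
  have h1 : HasDerivAt (fun t => F (t⁻¹)) (A * (-1)) 1 :=
    HasDerivAt.comp (h₂ := F) (h := fun t : ℝ => t⁻¹) (1:ℝ) (by simpa using hd) hinv
  have h2 : HasDerivAt (fun t : ℝ => (t⁻¹) ^ m) (- m) 1 := by
    have := hinv.pow m
    simp only [inv_one, one_pow, mul_one, mul_neg] at this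
    exact this
  have h3 := h2.mul h1
  have h4 : HasDerivAt F (- m * F 1 + A * (-1)) 1 := by
    have h5 : F =ᶠ[nhds 1] ((fun t : ℝ => (t⁻¹) ^ m) * fun t => F t⁻¹) := by
      filter_upwards [lt_mem_nhds (zero_lt_one (α := ℝ))] with t ht
      simp only [hF, hV, Pi.mul_apply]
      exact pot_sym ρ hc h0 C hC hs t ht
    refine (h3.congr_of_eventuallyEq h5).congr_deriv ?_
    simp
  have := hd.unique h4
  rw [← hF1]
  linarith

lemma p_virial {n : ℕ} (q : EuclideanSpace ℝ (Fin n) → ℝ) (K : NNReal) (hq : LipschitzWith K q)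
    (hs : HasCompactSupport q) :
    ∫ x, fderiv ℝ q x x = - n * ∫ x, q x := by
  obtain ⟨R, hR0, hR⟩ : ∃ R : ℝ, 0 < R ∧ tsupport q ⊆ Metric.ball 0 R := by
    obtain ⟨R, hR⟩ := hs.isBounded.subset_ball 0
    exact ⟨max R 1, by positivity, hR.trans (Metric.ball_subset_ball (le_max_left _ _))⟩
  set w : EuclideanSpace ℝ (Fin n) → ℝ := (Metric.ball 0 (2 * R)).indicator 1 with hw
  have hwI : Integrable w := by
    rw [hw, integrable_indicator_iff measurableSet_ball]
    exact integrableOn_const (measure_ball_lt_top.ne)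
  have hq0 : ∀ x, q x ≠ 0 → ‖x‖ < R := fun x hx => by
    simpa using hR (subset_tsupport _ hx)
  have hwq : ∀ t : ℝ, 1/2 < t → ∀ x, w x * q (t • x) = q (t • x) := by
    intro t ht x
    by_cases h : q (t • x) = 0
    · simp [h]
    · have := hq0 _ h
      rw [norm_smul, Real.norm_of_nonneg (by linarith)] at this
      have h2 : x ∈ Metric.ball (0 : EuclideanSpace ℝ (Fin n)) (2 * R) := by
        rw [mem_ball_zero_iff]
        nlinarith [norm_nonneg x]
      simp [hw, h2]
  have hwq1 : ∀ x, w x * q x = q x := fun x => by simpa using hwq 1 (by norm_num) x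
  have hwd : ∀ x, w x * fderiv ℝ q x x = fderiv ℝ q x x := by
    intro x
    by_cases h : fderiv ℝ q x = 0
    · simp [h]
    · have := hR (support_fderiv_subset ℝ h)
      have h2 : x ∈ Metric.ball (0 : EuclideanSpace ℝ (Fin n)) (2 * R) :=
        Metric.ball_subset_ball (by linarith) this
      simp [hw, h2]
  have hd := scale_deriv q w K hq hwI
    (by simpa only [hwq1] using hq.continuous.integrable_of_hasCompactSupport hs) (by
      refine (hwI.norm.mul_const (2 * R)).mono' 
        (hwI.aestronglyMeasurable.norm.mul continuous_norm.aestronglyMeasurable)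
        (Filter.Eventually.of_forall fun x => ?_)
      by_cases h : x ∈ Metric.ball (0 : EuclideanSpace ℝ (Fin n)) (2 * R)
      · have h' := mem_ball_zero_iff.1 h
        simp only [norm_mul, norm_norm]
        gcongr
      · simp [hw, h])
  simp only [hwd] at hd
  have hinv : HasDerivAt (fun t : ℝ => t⁻¹) (-1) 1 := by simpa using hasDerivAt_inv (one_ne_zero (α := ℝ))
  have h2 : HasDerivAt (fun t : ℝ => (t⁻¹) ^ n * ∫ x, q x) (- n * ∫ x, q x) 1 := by
    simpa using (hinv.pow n).mul_const (∫ x, q x)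
  refine hd.unique (h2.congr_of_eventuallyEq ?_)
  filter_upwards [lt_mem_nhds (show (1/2 : ℝ) < 1 by norm_num)] with t ht
  simp only [hwq t ht]
  have ht0 : 0 < t := by linarith
  rw [Measure.integral_comp_smul, finrank_euclideanSpace_fin, abs_of_pos (by positivity), inv_pow,
    smul_eq_mul]

/-- extension by zero is differentiable -/
lemma ext_diff {n : ℕ} (D : Set (EuclideanSpace ℝ (Fin n))) (hD : IsOpen D)
    (p : EuclideanSpace ℝ (Fin n) → ℝ) (hp : ContinuousOn p (closure D))
    (hp0 : ∀ x ∈ frontier D, p x = 0) (L : EuclideanSpace ℝ (Fin n) → EuclideanSpace ℝ (Fin n) →L[ℝ] ℝ)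
    (hL : ∀ x ∈ D, HasFDerivAt p (L x) x) (hL0 : ∀ x ∉ D, L x = 0)
    (b : EuclideanSpace ℝ (Fin n) → ℝ) (hb : Continuous b) (hbL : ∀ x, ‖L x‖ ≤ b x)
    (hb0 : ∀ x ∉ D, b x = 0) (x) : HasFDerivAt (D.indicator p) (L x) x := by
  have hcont : Continuous (D.indicator p) := by
    classical
    have := continuous_piecewise (s := D) (f := p) (g := fun _ => (0:ℝ)) hp0 hp continuousOn_const
    rwa [show D.indicator p = D.piecewise p fun _ => 0 by
      ext y; by_cases hy : y ∈ D <;> simp [hy]]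
  have hin : ∀ z ∈ D, HasFDerivAt (D.indicator p) (L z) z := fun z hz => by
    refine (hL z hz).congr_of_eventuallyEq ?_
    filter_upwards [hD.mem_nhds hz] with y hy
    simp [hy]
  by_cases hx : x ∈ D
  · exact hin x hx
  rw [hL0 x hx, hasFDerivAt_iff_isLittleO_nhds_zero, Asymptotics.isLittleO_iff]
  intro ε hε
  have h1 : ∀ᶠ z in nhds x, b z < ε := hb.continuousAt.eventually_lt continuousAt_const (by rw [hb0 x hx]; exact hε)
  obtain ⟨δ, hδ, hball⟩ := Metric.eventually_nhds_iff_ball.1 h1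
  filter_upwards [Metric.ball_mem_nhds 0 hδ] with h hh
  have hx0 : D.indicator p x = 0 := by simp [hx]
  simp only [hx0, sub_zero, zero_apply]
  by_cases hy : x + h ∈ D
  swap
  · simp only [indicator_of_notMem hy, norm_zero]; positivity
  let c : ℝ → EuclideanSpace ℝ (Fin n) := fun t => x + t • h
  have hcc : Continuous c := by fun_prop
  let S := Icc (0:ℝ) 1 ∩ c ⁻¹' Dᶜ
  have hS : IsCompact S := isCompact_Icc.inter_right (hD.isClosed_compl.preimage hcc)
  have hSne : S.Nonempty := ⟨0, by simp, by simpa [c] using hx⟩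
  obtain ⟨s, hsS, hsmax⟩ := hS.exists_isGreatest hSne
  have hs1 : s < 1 := lt_of_le_of_ne hsS.1.2 (by
    rintro rfl
    exact hsS.2 (by simpa [c] using hy))
  have hmem : ∀ t ∈ Ioo s 1, c t ∈ D := by
    intro t ht
    by_contra hcon
    exact absurd (hsmax ⟨⟨hsS.1.1.trans ht.1.le, ht.2.le⟩, hcon⟩) (not_le.2 ht.1)
  obtain ⟨t, ht, hteq⟩ := exists_hasDerivAt_eq_slope (fun t => D.indicator p (c t)) (fun t => L (c t) h) hs1
    (hcont.comp hcc).continuousOn (fun t ht => by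
      have h2 : HasDerivAt c h t := by
        simpa [c] using ((hasDerivAt_id t).smul_const h).const_add x
      exact (hin (c t) (hmem t ht)).comp_hasDerivAt t h2)
  have hs0 : D.indicator p (c s) = 0 := indicator_of_notMem hsS.2 p
  have hc1 : c 1 = x + h := by simp [c]
  rw [hs0, hc1, sub_zero, eq_div_iff (by linarith)] at hteq
  rw [← hteq, norm_mul, Real.norm_of_nonneg (by linarith : (0:ℝ) ≤ 1 - s)]
  have hct : c t ∈ Metric.ball x δ := by
    rw [Metric.mem_ball, dist_eq_norm]
    have : c t - x = t • h := by simp [c]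
    rw [this, norm_smul, Real.norm_of_nonneg (by linarith [hsS.1.1, ht.1])]
    have := mem_ball_zero_iff.1 hh
    nlinarith [norm_nonneg h, ht.2]
  have hLb : ‖L (c t) h‖ ≤ ε * ‖h‖ := ((L (c t)).le_opNorm h).trans
    (by gcongr; exact (hbL _).trans (hball _ hct).le)
  have : 0 ≤ ‖L (c t) h‖ := norm_nonneg _
  nlinarith [hsS.1.1]

lemma supp_sub {n : ℕ} (D : Set (EuclideanSpace ℝ (Fin n))) (hD_open : IsOpen D) (hD_bdry : HasC1Boundary D)
    (ρ : EuclideanSpace ℝ (Fin n) → ℝ) (hρ_cont : Continuous ρ) 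
    (hρ_supp : Function.support ρ ⊆ closure D) : Function.support ρ ⊆ D := by
  obtain ⟨f, hf, hDf, hfr⟩ := hD_bdry
  intro x hx
  by_contra hxD
  have hfx : 0 ≤ f x := by
    rw [hDf] at hxD; simpa using hxD
  have hcl : closure D ⊆ {y | f y ≤ 0} :=
    closure_minimal (fun y hy => by rw [hDf] at hy; exact le_of_lt (show f y < 0 from hy))
      (isClosed_le hf.continuous continuous_const)
  have hmax : IsLocalMax f x := by
    have : Function.support ρ ∈ nhds x := (hρ_cont.isOpen_support).mem_nhds hx
    filter_upwards [this] with y hy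
    exact (hcl (hρ_supp hy)).trans hfx
  exact hfr x (by rw [hD_open.frontier_eq]; exact ⟨hρ_supp hx, hxD⟩) hmax.fderiv_eq_zero

/-- Stationary energy of a self-gravitating polytropic gas in equilibrium in
dimension `n ≥ 3`:
`∫_D p/(γ−1) + (1/2)∫_D ρΦ = ((2(n−1) − nγ)/((n−2)(γ−1)))·∫_D p`,
where `Φ(x) = −G∫ρ(y)/‖x−y‖^{n−2} dy` and `∇p = −ρ∇Φ` on `D`. -/
theorem stmt14 (n : ℕ) (hn : 3 ≤ n) (γ G : ℝ) (hγ : 1 < γ) (hG : 0 < G)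
    (D : Set (EuclideanSpace ℝ (Fin n))) (hD_open : IsOpen D)
    (hD_bdd : Bornology.IsBounded D) (hD_bdry : HasC1Boundary D)
    (ρ : EuclideanSpace ℝ (Fin n) → ℝ) (hρ_cont : Continuous ρ)
    (hρ_nonneg : ∀ x, 0 ≤ ρ x) (hρ_bdd : ∃ C, ∀ x, ρ x ≤ C)
    (hρ_supp : Function.support ρ ⊆ closure D)
    (Φ : EuclideanSpace ℝ (Fin n) → ℝ)
    (hΦ : ∀ x, Φ x = -G * ∫ y, ρ y / ‖x - y‖ ^ (n - 2))
    (p : EuclideanSpace ℝ (Fin n) → ℝ)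
    (hp : ContDiffOn ℝ 1 p (closure D))
    (hp0 : ∀ x ∈ frontier D, p x = 0)
    (heq : ∀ x ∈ D, gradient p x = -ρ x • gradient Φ x) :
    (∫ x in D, p x / (γ - 1)) + (1 / 2) * ∫ x in D, ρ x * Φ x
      = ((2 * ((n : ℝ) - 1) - (n : ℝ) * γ) / (((n : ℝ) - 2) * (γ - 1)))
          * ∫ x in D, p x := by
  have hsub := supp_sub D hD_open hD_bdry ρ hρ_cont hρ_supp
  have hclc : IsCompact (closure D) := hD_bdd.isCompact_closure
  have hρc : HasCompactSupport ρ :=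
    HasCompactSupport.intro hclc fun x hx => by
      by_contra h; exact hx (subset_closure (hsub h))
  have hρ0 : ∀ x ∉ D, ρ x = 0 := fun x hx => by
    by_contra h; exact hx (hsub h)
  obtain ⟨C, hC⟩ := hρ_bdd
  obtain ⟨m, rfl⟩ : ∃ m, n = m + 2 := ⟨n - 2, by omega⟩
  have hm : 1 ≤ m := by omega
  simp only [Nat.add_sub_cancel] at hΦ
  set V : EuclideanSpace ℝ (Fin (m+2)) → ℝ := fun x => ∫ y, ρ y / ‖x - y‖ ^ m with hV
  have hΦV : Φ = fun x => (-G) * V x := funext hΦ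
  obtain ⟨K, hK⟩ := pot_lip ρ hρ_cont hρ_nonneg C hC (hρ_cont.integrable_of_hasCompactSupport hρc)
  have hvir := pot_virial ρ hρ_cont hρ_nonneg C hC hρc V rfl
  have hfd : ∀ x, fderiv ℝ Φ x = (-G) • fderiv ℝ V x := by
    intro x
    rw [hΦV]
    exact congrFun (fderiv_const_smul_field (𝕜 := ℝ) (-G) (f := V)) x
  have hΦvir : 2 * ∫ x, ρ x * fderiv ℝ Φ x x = - m * ∫ x, ρ x * Φ x := by
    have e1 : ∀ x, ρ x * fderiv ℝ Φ x x = (-G) * (ρ x * fderiv ℝ V x x) := fun x => by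
      rw [hfd]; simp; ring
    have e2 : ∀ x, ρ x * Φ x = (-G) * (ρ x * V x) := fun x => by
      rw [hΦV]; ring
    simp_rw [e1, e2, integral_const_mul]
    linear_combination (-G) * hvir
  set L : EuclideanSpace ℝ (Fin (m+2)) → EuclideanSpace ℝ (Fin (m+2)) →L[ℝ] ℝ :=
    fun x => (-ρ x) • fderiv ℝ Φ x with hLdef
  set b : EuclideanSpace ℝ (Fin (m+2)) → ℝ := fun x => ρ x * (G * K) with hbdef
  have hbL : ∀ x, ‖L x‖ ≤ b x := by
    intro x
    simp only [hLdef, hbdef, hfd]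
    rw [norm_smul, norm_smul, norm_neg, norm_neg, Real.norm_of_nonneg (hρ_nonneg x),
      Real.norm_of_nonneg hG.le]
    have := hρ_nonneg x
    have := norm_fderiv_le_of_lipschitz ℝ hK (x₀ := x)
    gcongr
  have hLp : ∀ x ∈ D, HasFDerivAt p (L x) x := by
    intro x hx
    have hd : DifferentiableAt ℝ p x :=
      ((hp.differentiableOn one_ne_zero) x (subset_closure hx)).differentiableAt
        (Filter.mem_of_superset (hD_open.mem_nhds hx) subset_closure)
    have : fderiv ℝ p x = L x := by
      have := heq x hx
      unfold gradient at this
      have h2 := congrArg (InnerProductSpace.toDual ℝ _) this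
      rw [map_smulₛₗ] at h2
      simpa [hLdef] using h2
    rw [← this]
    exact hd.hasFDerivAt
  have hq := ext_diff D hD_open p hp.continuousOn hp0 L hLp (fun x hx => by simp [hLdef, hρ0 x hx])
    b (by fun_prop) hbL (fun x hx => by simp [hbdef, hρ0 x hx])
  have hqL : LipschitzWith (Real.toNNReal (C * (G * K))) (D.indicator p) := by
    refine lipschitzWith_of_nnnorm_fderiv_le (𝕜 := ℝ) (fun x => (hq x).differentiableAt) fun x => ?_
    rw [(hq x).fderiv]
    refine NNReal.coe_le_coe.1 ?_
    refine ((hbL x).trans ?_).trans (Real.le_coe_toNNReal _)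
    have := hC x
    simp only [hbdef]
    gcongr
  have hqc : HasCompactSupport (D.indicator p) :=
    HasCompactSupport.intro hclc fun x hx =>
      indicator_of_notMem (fun h => hx (subset_closure h)) _
  have hpv := p_virial _ _ hqL hqc
  have e3 : ∀ x, fderiv ℝ (D.indicator p) x x = - (ρ x * fderiv ℝ Φ x x) := fun x => by
    rw [(hq x).fderiv]; simp [hLdef]
  simp_rw [e3] at hpv
  rw [integral_neg, integral_indicator hD_open.measurableSet] at hpv
  have e4 : ∫ x in D, ρ x * Φ x = ∫ x, ρ x * Φ x :=
    setIntegral_eq_integral_of_forall_compl_eq_zero fun x hx => by rw [hρ0 x hx, zero_mul]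
  rw [integral_div, e4]
  set P := ∫ x in D, p x
  set W := ∫ x, ρ x * Φ x
  have hm0 : (0:ℝ) < m := by exact_mod_cast hm
  have hW : W = - 2 * (m + 2) / m * P := by
    field_simp
    push_cast at hpv
    linarith
  rw [hW]
  have : γ - 1 ≠ 0 := by linarith
  have h2 : ((m + 2 : ℕ) : ℝ) - 2 = m := by push_cast; ring
  rw [h2]
  push_cast
  field_simp
  ring
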